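/- (Barendregt) A numeral system d is adequate — i.e. it possesses closed λ-terms for Successor, Predecessor, and Zero Test — if and only if every total recursive (computable) function φ : ℕ^p → ℕ (for every arity p ≥ 1) is λ-definable with respect to d. -/

import Mathlib

/-- Untyped λ-terms in de Bruijn notation. -/
inductive Lam : Type
  | var : ℕ → Lam
  | app : Lam → Lam → Lam
  | lam : Lam → Lam
  deriving DecidableEq

namespace Lam

/-- Shift by one the free variables with index ≥ `d`. -/
def lift (d : ℕ) : Lam → Lam
  | var n => if n < d then var n else var (n + 1)
  | app M N => app (lift d M) (lift d N)
  | lam M => lam (lift (d + 1) M)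

/-- Capture-avoiding substitution of `N` for the free variable of index `n`. -/
def subst : Lam → ℕ → Lam → Lam
  | var m, n, N => if m = n then N else if n < m then var (m - 1) else var m
  | app M₁ M₂, n, N => app (subst M₁ n N) (subst M₂ n N)
  | lam M, n, N => lam (subst M (n + 1) (lift 0 N))

/-- One-step β-reduction (contraction of a β-redex anywhere in the term). -/
inductive Step : Lam → Lam → Prop
  | beta (M N : Lam) : Step (app (lam M) N) (subst M 0 N)
  | appL {M M' : Lam} (N : Lam) : Step M M' → Step (app M N) (app M' N)
  | appR (M : Lam) {N N' : Lam} : Step N N' → Step (app M N) (app M N')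
  | lam {M M' : Lam} : Step M M' → Step (Lam.lam M) (Lam.lam M')

/-- β-equivalence: the equivalence relation generated by one-step β-reduction. -/
def BetaEq : Lam → Lam → Prop := Relation.EqvGen Step

/-- The variable of index `n` occurs free in the term. -/
def HasFree : Lam → ℕ → Prop
  | var m, n => m = n
  | app M N, n => HasFree M n ∨ HasFree N n
  | lam M, n => HasFree M (n + 1)

/-- A term is closed if it has no free variables. -/
def Closed (M : Lam) : Prop := ∀ n, ¬ HasFree M n

/-- A term is β-normal: it contains no β-redex. -/
def IsBetaNormal : Lam → Prop
  | app (lam _) _ => False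
  | app M N => IsBetaNormal M ∧ IsBetaNormal N
  | lam M => IsBetaNormal M
  | var _ => True

/-- A term is βη-normal: it contains no β-redex and no η-redex
`λx.(M x)` with `x` not free in `M`. -/
def IsBetaEtaNormal : Lam → Prop
  | app (lam _) _ => False
  | app M N => IsBetaEtaNormal M ∧ IsBetaEtaNormal N
  | lam (app M (var 0)) => HasFree M 0 ∧ IsBetaEtaNormal (app M (var 0))
  | lam M => IsBetaEtaNormal M
  | var _ => True

/-- `I = λx.x`. -/
def I : Lam := lam (var 0)

/-- `T = λxλy.x`. -/
def T : Lam := lam (lam (var 1))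

/-- `F = λxλy.y`. -/
def F : Lam := lam (lam (var 0))

/-- The pair `<M,N> = λx.(x M N)` (the binder shifts the free variables of `M,N`). -/
def pair (M N : Lam) : Lam := lam (app (app (var 0) (lift 0 M)) (lift 0 N))

end Lam

/-- Iterated application `F M₁ … Mₚ`. -/
def Lam.applyAll : Lam → List Lam → Lam
  | G, [] => G
  | G, M :: Ms => Lam.applyAll (Lam.app G M) Ms

/-!
Closed terms modulo β form a combinatory algebra, and both directions of the theorem are
computations in such an algebra.

If `d` is adequate, the zero test branches and the fixed point combinator solves recursive
equations, so primitive recursion and minimisation can be carried out on the numerals.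

Conversely, definability of the computable functions gives the successor and the predecessor at
once. Composing a term for the function that is `0` at `0` and `1` elsewhere with a term that
separates `d 0` from `d 1` gives the zero test. Such a separating term exists by Böhm's theorem:
in an environment sending each variable to a tupling combinator `λ x₁ … xₙ b. b x₁ … xₙ`, with
arities `n` spaced further apart than any number of arguments that occurs, two distinct βη-normal
forms either consume different numbers of further arguments, which separates them, or differ in an
argument that can be projected out.
-/

/-- Combinatory algebras: an application, written as multiplication, with the combinators
`k = λ x y. x` and `s = λ x y z. x z (y z)`. -/
class CombinatoryAlgebra (A : Type*) extends Mul A where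
  k : A
  s : A
  k_mul_mul (a b : A) : k * a * b = a
  s_mul_mul_mul (a b c : A) : s * a * b * c = a * c * (b * c)

namespace CombinatoryAlgebra

variable {A : Type*} [CombinatoryAlgebra A]

attribute [simp] k_mul_mul s_mul_mul_mul

/-! ### Combinators -/

/-- The combinator `λ x. x`. -/
def ident : A := s * k * k

/-- The combinator `λ f g x. f (g x)`. -/
def comp : A := s * (k * s) * k

/-- The combinator `λ f x y. f y x`. -/
def swap : A := s * (s * (k * comp) * s) * (k * k)

@[simp] theorem ident_mul (a : A) : ident * a = a := by simp [ident]

@[simp] theorem comp_mul_mul_mul (f g a : A) : comp * f * g * a = f * (g * a) := by simp [comp]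

@[simp] theorem swap_mul_mul_mul (f a b : A) : swap * f * a * b = f * b * a := by simp [swap]

/-- Iterated application `a l₁ … lₙ`. -/
def apps (a : A) (l : List A) : A := l.foldl (· * ·) a

@[simp] theorem apps_nil (a : A) : apps a [] = a := rfl

@[simp] theorem apps_cons (a b : A) (l : List A) : apps a (b :: l) = apps (a * b) l := rfl

@[simp] theorem apps_append (a : A) (l l' : List A) : apps a (l ++ l') = apps (apps a l) l' :=
  List.foldl_append

/-- The combinator `λ u x₁ … xₙ. u`. -/
def discard : ℕ → A
  | 0 => ident
  | n + 1 => comp * k * discard n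

/-- The combinator `λ f g x₁ … xₙ. f x₁ … xₙ (g x₁ … xₙ)`. -/
def distrib : ℕ → A
  | 0 => ident
  | n + 1 => comp * s * (comp * distrib n)

/-- The combinator `λ c x₁ … xₙ b. c b x₁ … xₙ`. -/
def rotate : ℕ → A
  | 0 => ident
  | n + 1 => comp * (comp * rotate n) * swap

/-- The combinator `λ x₁ … xₙ b. b x₁ … xₙ`. -/
def tuple (n : ℕ) : A := rotate n * ident

/-- The combinator `λ x₀ … xᵢ₊ₙ. xᵢ`. -/
def proj : ℕ → ℕ → A
  | 0, n => discard n
  | i + 1, n => k * proj i n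

/-- The combinator `λ x. x l₁ … lₙ`. -/
def applyTo : List A → A
  | [] => ident
  | a :: l => comp * applyTo l * (swap * ident * a)

theorem apps_discard {n : ℕ} {l : List A} (hl : l.length = n) (u : A) :
    apps (discard n * u) l = u := by
  subst hl
  induction l generalizing u with
  | nil => simp [discard]
  | cons a l ih => simp [discard, ih]

theorem apps_distrib {n : ℕ} {l : List A} (hl : l.length = n) (f g : A) :
    apps (distrib n * f * g) l = apps f l * apps g l := by
  subst hl
  induction l generalizing f g with
  | nil => simp [distrib]
  | cons a l ih => simp [distrib, ih]

theorem apps_rotate {n : ℕ} {l : List A} (hl : l.length = n) (c b : A) :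
    apps (rotate n * c) l * b = apps (c * b) l := by
  subst hl
  induction l generalizing c with
  | nil => simp [rotate]
  | cons a l ih => simp [rotate, ih]

theorem apps_tuple_append_cons {n : ℕ} {l : List A} (hl : l.length = n) (b : A) (l' : List A) :
    apps (tuple n) (l ++ b :: l') = apps b (l ++ l') := by
  simp [tuple, apps_rotate hl]

theorem apps_proj {i n : ℕ} {l : List A} (hl : l.length = i + 1 + n) :
    apps (proj i n) l = l[i] := by
  induction i generalizing l with
  | zero =>
    obtain ⟨a, l, rfl⟩ := List.exists_cons_of_length_pos (l := l) (by omega)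
    exact apps_discard (by simpa [add_comm] using hl) a
  | succ i ih =>
    obtain ⟨a, l, rfl⟩ := List.exists_cons_of_length_pos (l := l) (by omega)
    simpa [proj] using ih (l := l) (by simp only [List.length_cons] at hl; omega)

@[simp] theorem applyTo_mul (l : List A) (a : A) : applyTo l * a = apps a l := by
  induction l generalizing a with
  | nil => simp [applyTo]
  | cons b l ih => simp [applyTo, ih]

/-- The element `λ x₁ … xₙ. f (g₁ x₁ … xₙ) … (gₘ x₁ … xₙ)`. -/
def multicomp (n : ℕ) (f : A) (gs : List A) : A :=
  gs.foldl (fun h g => distrib n * h * g) (discard n * f)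

theorem apps_multicomp {n : ℕ} {l : List A} (hl : l.length = n) (f : A) (gs : List A) :
    apps (multicomp n f gs) l = apps f (gs.map (apps · l)) := by
  have apps_foldl (h : A) : apps (gs.foldl (fun h g => distrib n * h * g) h) l =
      apps (apps h l) (gs.map (apps · l)) := by
    induction gs generalizing h with
    | nil => rfl
    | cons g gs ih => simp [ih, apps_distrib hl]
  rw [multicomp, apps_foldl, apps_discard hl]

/-! ### Recursive equations -/

/-- The binary function `f` is given by application of an element of the algebra. -/
def Representable₂ (f : A → A → A) : Prop := ∃ a : A, ∀ x y, a * x * y = f x y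

theorem representable₂_fst : Representable₂ fun x _ : A => x := ⟨k, k_mul_mul⟩

theorem representable₂_snd : Representable₂ fun _ y : A => y := ⟨k * ident, by simp⟩

theorem representable₂_const (c : A) : Representable₂ fun _ _ : A => c :=
  ⟨k * (k * c), by simp⟩

theorem Representable₂.mul {f g : A → A → A} (hf : Representable₂ f) (hg : Representable₂ g) :
    Representable₂ fun x y => f x y * g x y := by
  obtain ⟨a, ha⟩ := hf
  obtain ⟨b, hb⟩ := hg
  exact ⟨s * (comp * s * a) * b, by simp [ha, hb]⟩

theorem exists_mul_eq_self (g : A) : ∃ y : A, g * y = y := by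
  obtain ⟨w, hw⟩ : ∃ w : A, ∀ x, w * x = g * (x * x) :=
    ⟨comp * g * (s * ident * ident), by simp⟩
  exact ⟨w * w, (hw w).symm⟩

theorem Representable₂.exists_mul_eq {f : A → A → A} (hf : Representable₂ f) :
    ∃ r : A, ∀ t, r * t = f r t := by
  obtain ⟨g, hg⟩ := hf
  obtain ⟨r, hr⟩ := exists_mul_eq_self g
  exact ⟨r, fun t => by rw [← hg, hr]⟩

/-! ### Definability of the recursive functions -/

/-- The elements `σ`, `π` and `ζ` are a successor, a predecessor and a zero test for the sequence
`D`. The truth values of the zero test enter only through the branch they select. -/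
structure IsAdequateFor (D : ℕ → A) (σ π ζ : A) : Prop where
  succ_mul (n : ℕ) : σ * D n = D (n + 1)
  pred_mul_succ (n : ℕ) : π * D (n + 1) = D n
  isZero_mul_zero (a b : A) : ζ * D 0 * a * b = a
  isZero_mul_succ (n : ℕ) (a b : A) : ζ * D (n + 1) * a * b = b

/-- The partial function `f` is given on the numerals `D` by iterated application of an element
of the algebra; nothing is required where `f` is undefined. -/
def Definable (D : ℕ → A) {n : ℕ} (f : List.Vector ℕ n →. ℕ) : Prop :=
  ∃ g : A, ∀ v, ∀ y ∈ f v, apps g (v.toList.map D) = D y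

theorem definable_coe_iff {D : ℕ → A} {n : ℕ} {f : List.Vector ℕ n → ℕ} :
    Definable D (f : List.Vector ℕ n →. ℕ) ↔ ∃ g : A, ∀ v, apps g (v.toList.map D) = D (f v) := by
  simp [Definable]

theorem get_mem_of_mem_mOfFn {α : Type*} {n : ℕ} {f : Fin n → Part α} {v : List.Vector α n}
    (hv : v ∈ List.Vector.mOfFn f) (i : Fin n) : v.get i ∈ f i := by
  induction n with
  | zero => exact i.elim0
  | succ n ih =>
    simp only [List.Vector.mOfFn, Part.bind_eq_bind, Part.mem_bind_iff] at hv
    obtain ⟨a, ha, w, hw, hv⟩ := hv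
    obtain rfl : v = a ::ᵥ w := by simpa using hv
    cases i using Fin.cases with
    | zero => simpa using ha
    | succ j => simpa using ih hw j

theorem Definable.comp {D : ℕ → A} {m n : ℕ} {f : List.Vector ℕ n →. ℕ}
    {g : Fin n → List.Vector ℕ m →. ℕ} (hf : Definable D f) (hg : ∀ i, Definable D (g i)) :
    Definable D fun v => (List.Vector.mOfFn fun i => g i v) >>= f := by
  obtain ⟨f', hf'⟩ := hf
  choose g' hg' using hg
  refine ⟨multicomp m f' (List.ofFn g'), fun v y hy => ?_⟩
  obtain ⟨w, hw, hy⟩ := Part.mem_bind_iff.1 hy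
  have args_eq : (List.ofFn g').map (apps · (v.toList.map D)) = w.toList.map D := by
    rw [← w.ofFn_get, List.Vector.toList_ofFn, List.map_ofFn, List.map_ofFn]
    exact congrArg List.ofFn <| funext fun i => hg' i v _ (get_mem_of_mem_mOfFn hw i)
  rw [apps_multicomp (by simp), args_eq, hf' w y hy]

theorem Definable.total_comp {D : ℕ → A} {m n : ℕ} {f : List.Vector ℕ n → ℕ}
    {g : Fin n → List.Vector ℕ m → ℕ} (hf : Definable D (f : List.Vector ℕ n →. ℕ))
    (hg : ∀ i, Definable D (g i : List.Vector ℕ m →. ℕ)) :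
    Definable D ((fun v => f (List.Vector.ofFn fun i => g i v) : List.Vector ℕ m → ℕ) :
      List.Vector ℕ m →. ℕ) :=
  (hf.comp hg).imp fun _ h v y hy => h v y <| Part.mem_bind_iff.2 ⟨_, by simp, hy⟩

theorem definable_get (D : ℕ → A) {n : ℕ} (i : Fin n) :
    Definable D ((fun v => v.get i : List.Vector ℕ n → ℕ) : List.Vector ℕ n →. ℕ) := by
  refine definable_coe_iff.2 ⟨proj i (n - (i + 1)), fun v => ?_⟩
  rw [apps_proj (by simp)]
  simp [List.Vector.get_eq_get_toList]

namespace IsAdequateFor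

variable {D : ℕ → A} {σ π ζ : A}

theorem definable_prec (h : IsAdequateFor D σ π ζ) {n : ℕ} {f : List.Vector ℕ n → ℕ}
    {g : List.Vector ℕ (n + 2) → ℕ} (hf : Definable D (f : List.Vector ℕ n →. ℕ))
    (hg : Definable D (g : List.Vector ℕ (n + 2) →. ℕ)) :
    Definable D ((fun v => v.head.rec (f v.tail) fun y r => g (y ::ᵥ r ::ᵥ v.tail) :
      List.Vector ℕ (n + 1) → ℕ) : List.Vector ℕ (n + 1) →. ℕ) := by
  obtain ⟨f', hf'⟩ := definable_coe_iff.1 hf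
  obtain ⟨g', hg'⟩ := definable_coe_iff.1 hg
  -- `r x l = if x = 0 then f l else g (π x) (r (π x) l) l`
  obtain ⟨r, hr⟩ : ∃ r : A, ∀ x, r * x =
      ζ * x * f' * (distrib n * (rotate n * (g' * (π * x))) * (r * (π * x))) :=
    Representable₂.exists_mul_eq (by
      repeat' first
        | exact representable₂_fst | exact representable₂_snd | exact representable₂_const _
        | apply Representable₂.mul)
  refine definable_coe_iff.2 ⟨r, fun v => ?_⟩
  obtain ⟨x, w, rfl⟩ := v.exists_eq_cons
  simp only [List.Vector.toList_cons, List.map_cons, apps_cons, List.Vector.head_cons,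
    List.Vector.tail_cons]
  have hw : (w.toList.map D).length = n := by simp
  induction x with
  | zero =>
    rw [hr, h.isZero_mul_zero]
    exact hf' w
  | succ x ih =>
    rw [hr, h.isZero_mul_succ, h.pred_mul_succ, apps_distrib hw, apps_rotate hw, ih]
    exact hg' (x ::ᵥ _ ::ᵥ w)

theorem definable_rfind (h : IsAdequateFor D σ π ζ) {n : ℕ} {f : List.Vector ℕ (n + 1) → ℕ}
    (hf : Definable D (f : List.Vector ℕ (n + 1) →. ℕ)) :
    Definable D fun v => Nat.rfind fun x => some (decide (f (x ::ᵥ v) = 0)) := by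
  obtain ⟨f', hf'⟩ := definable_coe_iff.1 hf
  -- `r x l = if f x l = 0 then x else r (σ x) l`
  obtain ⟨r, hr⟩ : ∃ r : A, ∀ x, r * x = distrib n * (distrib n *
      (distrib n * (discard n * ζ) * (f' * x)) * (discard n * x)) * (r * (σ * x)) :=
    Representable₂.exists_mul_eq (by
      repeat' first
        | exact representable₂_fst | exact representable₂_snd | exact representable₂_const _
        | apply Representable₂.mul)
  refine ⟨r * D 0, fun v y hy => ?_⟩
  have hv : (v.toList.map D).length = n := by simp
  have apps_r (x : ℕ) : apps (r * D x) (v.toList.map D) =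
      ζ * D (f (x ::ᵥ v)) * D x * apps (r * D (x + 1)) (v.toList.map D) := by
    rw [hr, h.succ_mul, apps_distrib hv, apps_distrib hv, apps_distrib hv, apps_discard hv,
      apps_discard hv, ← hf' (x ::ᵥ v)]
    rfl
  obtain ⟨f_y, f_lt⟩ : f (y ::ᵥ v) = 0 ∧ ∀ {x}, x < y → f (x ::ᵥ v) ≠ 0 := by
    simpa using Nat.mem_rfind.1 hy
  have apps_r_eq {x : ℕ} (hx : x ≤ y) : apps (r * D x) (v.toList.map D) = D y := by
    induction hx using Nat.decreasingInduction with
    | self => rw [apps_r, f_y, h.isZero_mul_zero]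
    | of_succ x hx ih =>
      obtain ⟨z, hz⟩ := Nat.exists_eq_succ_of_ne_zero (f_lt hx)
      rw [apps_r, hz, h.isZero_mul_succ, ih]
  exact apps_r_eq y.zero_le

theorem definable_of_primrec (h : IsAdequateFor D σ π ζ) {n : ℕ} {f : List.Vector ℕ n → ℕ}
    (hf : Nat.Primrec' f) : Definable D (f : List.Vector ℕ n →. ℕ) := by
  induction hf with
  | zero => exact definable_coe_iff.2 ⟨D 0, by simp⟩
  | succ =>
    refine definable_coe_iff.2 ⟨σ, fun v => ?_⟩
    obtain ⟨x, w, rfl⟩ := v.exists_eq_cons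
    simp [w.eq_nil, h.succ_mul]
  | get i => exact definable_get D i
  | comp g _ _ hf hg => exact hf.total_comp hg
  | prec _ _ hf hg => exact h.definable_prec hf hg

theorem definable_of_partrec (h : IsAdequateFor D σ π ζ) {n : ℕ} {f : List.Vector ℕ n →. ℕ}
    (hf : Nat.Partrec' f) : Definable D f := by
  induction hf with
  | prim hf => exact h.definable_of_primrec hf
  | comp g _ _ hf hg => exact hf.comp hg
  | rfind _ hf => exact h.definable_rfind hf

theorem exists_apps_eq_of_computable (h : IsAdequateFor D σ π ζ) {p : ℕ}
    {φ : (Fin p → ℕ) → ℕ} (hφ : Computable φ) :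
    ∃ g : A, ∀ ns, apps g (List.ofFn fun i => D (ns i)) = D (φ ns) := by
  have φ_get_partrec : Partrec ((fun v => φ v.get : List.Vector ℕ p → ℕ) : List.Vector ℕ p →. ℕ) :=
    hφ.comp Primrec.vector_get'.to_comp
  obtain ⟨g, hg⟩ :=
    definable_coe_iff.1 (h.definable_of_partrec (Nat.Partrec'.of_part φ_get_partrec))
  refine ⟨g, fun ns => ?_⟩
  have get_ofFn : (List.Vector.ofFn ns).get = ns := funext (List.Vector.get_ofFn ns)
  simpa [get_ofFn, List.map_ofFn, Function.comp_def] using hg (List.Vector.ofFn ns)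

end IsAdequateFor

/-! ### Separability -/

/-- Some element of the algebra sends `x` and `y` to any two prescribed values. -/
def Separable (x y : A) : Prop := ∀ u v : A, ∃ a : A, a * x = u ∧ a * y = v

theorem Separable.symm {x y : A} (h : Separable x y) : Separable y x := fun u v =>
  (h v u).imp fun _ => And.symm

theorem Separable.of_apps (l : List A) {x y : A} (h : Separable (apps x l) (apps y l)) :
    Separable x y := fun u v => by
  obtain ⟨a, hx, hy⟩ := h u v
  exact ⟨comp * a * applyTo l, by simp [hx], by simp [hy]⟩

theorem separable_apps_tuple_of_lt {n n' : ℕ} {l l' : List A} (hl : l.length ≤ n)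
    (hlt : n - l.length < n' - l'.length) :
    Separable (apps (tuple n) l) (apps (tuple n') l') := fun u v => by
  obtain ⟨q, hq⟩ := Nat.exists_eq_add_of_lt hlt
  let fill (m : ℕ) : List A := List.replicate m k
  -- The first tuple is complete when it meets `x`, the second not before it meets `y`.
  let x : A := discard (n + q + 1) * u
  let y : A := discard n' * v
  refine ⟨applyTo (fill (n - l.length) ++ x :: (fill q ++ [y])), ?_, ?_⟩
  · calc applyTo (fill (n - l.length) ++ x :: (fill q ++ [y])) * apps (tuple n) l
        = apps (tuple n) ((l ++ fill (n - l.length)) ++ x :: (fill q ++ [y])) := by simp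
      _ = apps x ((l ++ fill (n - l.length)) ++ (fill q ++ [y])) :=
        apps_tuple_append_cons (by grind) _ _
      _ = u := apps_discard (by grind) u
  · calc applyTo (fill (n - l.length) ++ x :: (fill q ++ [y])) * apps (tuple n') l'
        = apps (tuple n') ((l' ++ fill (n - l.length) ++ x :: fill q) ++ y :: []) := by simp
      _ = apps y ((l' ++ fill (n - l.length) ++ x :: fill q) ++ []) :=
        apps_tuple_append_cons (by grind) _ _
      _ = v := apps_discard (by grind) v

theorem separable_apps_tuple_of_ne {n n' : ℕ} {l l' : List A} (hl : l.length ≤ n)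
    (hl' : l'.length ≤ n') (hne : n - l.length ≠ n' - l'.length) :
    Separable (apps (tuple n) l) (apps (tuple n') l') :=
  hne.lt_or_gt.elim (separable_apps_tuple_of_lt hl)
    fun hgt => (separable_apps_tuple_of_lt hl' hgt).symm

theorem separable_apps_tuple_of_getElem {n i : ℕ} {l l' : List A} (hl : l.length ≤ n)
    (hl' : l.length = l'.length) (hi : i < l.length) (h : Separable l[i] l'[i]) :
    Separable (apps (tuple n) l) (apps (tuple n) l') := by
  let fill : List A := List.replicate (n - l.length) k
  have apps_proj_fill {m : List A} (hm : l.length = m.length) :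
      apps (apps (tuple n) m) (fill ++ [proj i (n - (i + 1))]) = m[i] := by
    have hmf : (m ++ fill).length = n := by grind
    rw [← apps_append, ← List.append_assoc, apps_tuple_append_cons hmf, List.append_nil,
      apps_proj (by omega), List.getElem_append_left]
  apply Separable.of_apps (fill ++ [proj i (n - (i + 1))])
  rwa [apps_proj_fill rfl, apps_proj_fill hl']

end CombinatoryAlgebra

namespace Lam

/-! ### Free variables -/

/-- All free variables of `M` have index below `k`. -/
def ClosedAt (k : ℕ) (M : Lam) : Prop := ∀ n, HasFree M n → n < k

theorem closedAt_var {k m : ℕ} : ClosedAt k (var m) ↔ m < k := by simp [ClosedAt, HasFree]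

theorem closedAt_app {k : ℕ} {M N : Lam} :
    ClosedAt k (app M N) ↔ ClosedAt k M ∧ ClosedAt k N := by
  simp [ClosedAt, HasFree, or_imp, forall_and]

theorem closedAt_lam {k : ℕ} {M : Lam} : ClosedAt k (lam M) ↔ ClosedAt (k + 1) M := by
  refine ⟨fun h n hn => ?_, fun h n hn => Nat.lt_of_succ_lt_succ (h (n + 1) hn)⟩
  cases n with
  | zero => exact k.succ_pos
  | succ n => exact Nat.succ_lt_succ (h n hn)

theorem closed_iff_closedAt_zero {M : Lam} : Closed M ↔ ClosedAt 0 M := by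
  simp [Closed, ClosedAt]

theorem Closed.closedAt {M : Lam} (h : Closed M) (k : ℕ) : ClosedAt k M := fun n hn =>
  (h n hn).elim

theorem Closed.app {M N : Lam} (hM : Closed M) (hN : Closed N) : Closed (app M N) :=
  closed_iff_closedAt_zero.2 (closedAt_app.2 ⟨hM.closedAt 0, hN.closedAt 0⟩)

theorem closedAt_applyAll {k : ℕ} {M : Lam} {Ms : List Lam} :
    ClosedAt k (applyAll M Ms) ↔ ClosedAt k M ∧ ∀ L ∈ Ms, ClosedAt k L := by
  induction Ms generalizing M with
  | nil => simp [applyAll]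
  | cons N Ms ih => simp [applyAll, ih, closedAt_app, and_assoc]

theorem Closed.applyAll {M : Lam} {Ms : List Lam} (hM : Closed M) (hMs : ∀ L ∈ Ms, Closed L) :
    Closed (applyAll M Ms) :=
  closed_iff_closedAt_zero.2 <|
    closedAt_applyAll.2 ⟨hM.closedAt 0, fun L hL => (hMs L hL).closedAt 0⟩

theorem ClosedAt.lift_eq {k : ℕ} {M : Lam} (h : ClosedAt k M) : lift k M = M := by
  induction M generalizing k with
  | var m => exact if_pos (closedAt_var.1 h)
  | app M N ihM ihN => rw [lift, ihM (closedAt_app.1 h).1, ihN (closedAt_app.1 h).2]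
  | lam M ih => rw [lift, ih (closedAt_lam.1 h)]

theorem ClosedAt.subst_eq {k : ℕ} {M : Lam} (h : ClosedAt k M) (N : Lam) : subst M k N = M := by
  induction M generalizing k N with
  | var m =>
    have hm := closedAt_var.1 h
    rw [subst, if_neg hm.ne, if_neg hm.le.not_gt]
  | app M M' ihM ihM' => rw [subst, ihM (closedAt_app.1 h).1, ihM' (closedAt_app.1 h).2]
  | lam M ih => rw [subst, ih (closedAt_lam.1 h)]

theorem ClosedAt.lift {s : ℕ} {M : Lam} (h : ClosedAt s M) (k : ℕ) :
    ClosedAt (s + 1) (lift k M) := by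
  induction M generalizing k s with
  | var m =>
    have hm := closedAt_var.1 h
    rw [Lam.lift]
    split <;> exact closedAt_var.2 (by omega)
  | app M N ihM ihN =>
    exact closedAt_app.2 ⟨ihM (closedAt_app.1 h).1 k, ihN (closedAt_app.1 h).2 k⟩
  | lam M ih => exact closedAt_lam.2 (ih (closedAt_lam.1 h) (k + 1))

theorem hasFree_lift_of_lt {k n : ℕ} (hn : n < k) {M : Lam} :
    HasFree (lift k M) n ↔ HasFree M n := by
  induction M generalizing k n with
  | var m =>
    rw [lift]
    split
    · rfl
    · simp only [HasFree]; omega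
  | app M N ihM ihN => simp only [lift, HasFree, ihM hn, ihN hn]
  | lam _ ih => exact ih (Nat.succ_lt_succ hn)

theorem not_hasFree_lift_self (k : ℕ) (M : Lam) : ¬ HasFree (lift k M) k := by
  induction M generalizing k with
  | var m =>
    rw [lift]
    split <;> simp only [HasFree] <;> omega
  | app _ _ ihM ihN => exact not_or.2 ⟨ihM k, ihN k⟩
  | lam _ ih => exact ih (k + 1)

theorem subst_lift (M : Lam) (k : ℕ) (N : Lam) : subst (lift k M) k N = M := by
  induction M generalizing k N with
  | var m =>
    rw [lift]
    split
    · rw [subst, if_neg (by omega), if_neg (by omega)]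
    · rw [subst, if_neg (by omega), if_pos (by omega), Nat.add_sub_cancel]
  | app M M' ihM ihM' => rw [lift, subst, ihM, ihM']
  | lam M ih => rw [lift, subst, ih]

theorem lift_injective (k : ℕ) : Function.Injective (lift k) :=
  Function.LeftInverse.injective (g := (subst · k I)) fun M => subst_lift M k I

/-! ### Instantiation of the free variables by closed terms -/

/-- The environment mapping `0` to `a` and `n + 1` to `ρ n`. -/
def push {α : Type*} (a : α) (ρ : ℕ → α) : ℕ → α
  | 0 => a
  | n + 1 => ρ n

@[simp] theorem push_zero {α : Type*} (a : α) (ρ : ℕ → α) : push a ρ 0 = a := rfl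

@[simp] theorem push_succ {α : Type*} (a : α) (ρ : ℕ → α) (n : ℕ) : push a ρ (n + 1) = ρ n := rfl

theorem comp_push {α β : Type*} (f : α → β) (a : α) (ρ : ℕ → α) :
    f ∘ push a ρ = push (f a) (f ∘ ρ) := by
  funext n
  cases n <;> rfl

/-- Closed λ-terms. -/
abbrev ClosedTerm : Type := {M : Lam // Closed M}

/-- Simultaneous substitution of the closed terms `ρ i` for the free variables `k + i`. Since the
`ρ i` are closed they need not be lifted under binders. -/
def inst (ρ : ℕ → ClosedTerm) : ℕ → Lam → Lam
  | k, var m => if m < k then var m else ρ (m - k)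
  | k, app M N => app (inst ρ k M) (inst ρ k N)
  | k, lam M => lam (inst ρ (k + 1) M)

theorem closedAt_inst (ρ : ℕ → ClosedTerm) (k : ℕ) (M : Lam) : ClosedAt k (inst ρ k M) := by
  induction M generalizing k with
  | var m =>
    rw [inst]
    split
    · exact closedAt_var.2 ‹_›
    · exact (ρ (m - k)).2.closedAt k
  | app M N ihM ihN => exact closedAt_app.2 ⟨ihM k, ihN k⟩
  | lam M ih => exact closedAt_lam.2 (ih (k + 1))

theorem ClosedAt.inst_eq {k : ℕ} {M : Lam} (h : ClosedAt k M) (ρ : ℕ → ClosedTerm) :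
    inst ρ k M = M := by
  induction M generalizing k with
  | var m => exact if_pos (closedAt_var.1 h)
  | app M N ihM ihN => rw [inst, ihM (closedAt_app.1 h).1, ihN (closedAt_app.1 h).2]
  | lam M ih => rw [inst, ih (closedAt_lam.1 h)]

theorem subst_inst (ρ : ℕ → ClosedTerm) (N : ClosedTerm) (k : ℕ) (M : Lam) :
    subst (inst ρ (k + 1) M) k N = inst (push N ρ) k M := by
  induction M generalizing k with
  | var m =>
    rcases lt_trichotomy m k with hlt | rfl | hgt
    · simp [inst, subst, hlt, hlt.trans k.lt_succ_self, hlt.ne, hlt.le.not_gt]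
    · simp [inst, subst]
    · obtain ⟨j, rfl⟩ := Nat.exists_eq_add_of_lt hgt
      rw [inst, inst, if_neg (by omega), if_neg (by omega), ((ρ _).2.closedAt k).subst_eq,
        show k + j + 1 - (k + 1) = j by omega, show k + j + 1 - k = j + 1 by omega, push_succ]
  | app M M' ihM ihM' => rw [inst, subst, ihM, ihM', inst]
  | lam M ih => rw [inst, subst, (N.2.closedAt 0).lift_eq, ih, inst]

theorem inst_lift (ρ : ℕ → ClosedTerm) (N : ClosedTerm) (k : ℕ) (M : Lam) :
    inst (push N ρ) k (lift k M) = inst ρ k M := by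
  induction M generalizing k with
  | var m =>
    rw [lift]
    split
    · simp only [inst, if_pos ‹m < k›]
    · rw [inst, inst, if_neg (by omega), if_neg ‹¬ m < k›, Nat.succ_sub (by omega), push_succ]
  | app M M' ihM ihM' => rw [lift, inst, ihM, ihM', inst]
  | lam M ih => rw [lift, inst, ih, inst]

/-! ### The combinatory algebra of closed terms modulo β -/

theorem BetaEq.map {f : Lam → Lam} (hf : ∀ M N, Step M N → Step (f M) (f N)) {M N : Lam}
    (h : BetaEq M N) : BetaEq (f M) (f N) := by
  induction h with
  | rel M N h => exact .rel _ _ (hf M N h)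
  | refl M => exact .refl _
  | symm M N _ ih => exact .symm _ _ ih
  | trans M N L _ _ ihMN ihNL => exact .trans _ _ _ ihMN ihNL

theorem BetaEq.app {M M' N N' : Lam} (hM : BetaEq M M') (hN : BetaEq N N') :
    BetaEq (app M N) (app M' N') :=
  .trans _ _ _ (hM.map fun _ _ => Step.appL N) (hN.map fun _ _ => Step.appR M')

/-- β-equivalence as a setoid on closed terms. -/
def betaSetoid : Setoid ClosedTerm where
  r M N := BetaEq M N
  iseqv := ⟨fun _ => .refl _, .symm _ _, .trans _ _ _⟩

/-- Closed λ-terms modulo β-equivalence. -/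
def TermAlgebra : Type := Quotient betaSetoid

namespace TermAlgebra

/-- The class of a closed term. -/
def mk (M : ClosedTerm) : TermAlgebra := Quotient.mk betaSetoid M

/-- A chosen representative of a class of closed terms. -/
noncomputable def out (a : TermAlgebra) : ClosedTerm := Quotient.out a

theorem mk_out (a : TermAlgebra) : mk a.out = a := Quotient.out_eq a

theorem mk_eq_mk {M N : ClosedTerm} : mk M = mk N ↔ BetaEq M N := Quotient.eq (r := betaSetoid)

instance : Mul TermAlgebra :=
  ⟨Quotient.map₂ (fun M N => ⟨app M N, M.2.app N.2⟩) fun _ _ hM _ _ hN => BetaEq.app hM hN⟩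

end TermAlgebra

open TermAlgebra

/-- The value of a term in the algebra of closed terms modulo β, the values of its free variables
being given by `ρ`. It is computed on chosen representatives of these values. -/
noncomputable def eval (M : Lam) (ρ : ℕ → TermAlgebra) : TermAlgebra :=
  mk ⟨inst (out ∘ ρ) 0 M, closed_iff_closedAt_zero.2 (closedAt_inst (out ∘ ρ) 0 M)⟩

@[simp] theorem eval_var (i : ℕ) (ρ : ℕ → TermAlgebra) : eval (var i) ρ = ρ i :=
  mk_out (ρ i)

@[simp] theorem eval_app (M N : Lam) (ρ : ℕ → TermAlgebra) :
    eval (app M N) ρ = eval M ρ * eval N ρ := rfl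

@[simp] theorem eval_lam_mul (M : Lam) (ρ : ℕ → TermAlgebra) (a : TermAlgebra) :
    eval (lam M) ρ * a = eval M (push a ρ) := by
  have hβ : inst (out ∘ push a ρ) 0 M = subst (inst (out ∘ ρ) 1 M) 0 a.out := by
    rw [comp_push, subst_inst]
  conv_lhs => rw [← mk_out a]
  simp only [eval, hβ]
  exact mk_eq_mk.2 (.rel _ _ (.beta _ _))

theorem eval_lift_push (M : Lam) (ρ : ℕ → TermAlgebra) (a : TermAlgebra) :
    eval (lift 0 M) (push a ρ) = eval M ρ := by
  simp only [eval, comp_push, inst_lift]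

theorem Closed.eval_eq_mk {M : Lam} (hM : Closed M) (ρ : ℕ → TermAlgebra) :
    eval M ρ = mk ⟨M, hM⟩ := by
  simp only [eval, (hM.closedAt 0).inst_eq]

theorem Closed.betaEq_iff_eval_eq {M N : Lam} (hM : Closed M) (hN : Closed N)
    (ρ : ℕ → TermAlgebra) : BetaEq M N ↔ eval M ρ = eval N ρ := by
  rw [hM.eval_eq_mk, hN.eval_eq_mk, mk_eq_mk]

theorem exists_closed_eval_eq (a : TermAlgebra) (ρ : ℕ → TermAlgebra) :
    ∃ M, Closed M ∧ eval M ρ = a :=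
  ⟨a.out, a.out.2, (a.out.2.eval_eq_mk ρ).trans a.mk_out⟩

theorem closed_T : Closed T := by simp [Closed, T, HasFree]

theorem closed_F : Closed F := by simp [Closed, F, HasFree]

theorem eval_T_mul_mul (ρ : ℕ → TermAlgebra) (a b : TermAlgebra) : eval T ρ * a * b = a := by
  simp [T]

theorem eval_F_mul_mul (ρ : ℕ → TermAlgebra) (a b : TermAlgebra) : eval F ρ * a * b = b := by
  simp [F]

noncomputable instance : CombinatoryAlgebra TermAlgebra where
  k := eval T fun _ => mk ⟨T, closed_T⟩
  s := eval (lam (lam (lam (app (app (var 2) (var 0)) (app (var 1) (var 0))))))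
    fun _ => mk ⟨T, closed_T⟩
  k_mul_mul := eval_T_mul_mul _
  s_mul_mul_mul a b c := by simp

open CombinatoryAlgebra

theorem eval_applyAll (M : Lam) (Ms : List Lam) (ρ : ℕ → TermAlgebra) :
    eval (applyAll M Ms) ρ = apps (eval M ρ) (Ms.map (eval · ρ)) := by
  induction Ms generalizing M with
  | nil => rfl
  | cons N Ms ih => simp [applyAll, ih]

/-! ### Normal forms -/

/-- The term is an abstraction. -/
def IsLam : Lam → Prop
  | lam _ => True
  | _ => False

theorem isLam_iff {M : Lam} : IsLam M ↔ ∃ M', M = lam M' := by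
  cases M <;> simp [IsLam]

theorem isLam_lift {k : ℕ} {M : Lam} : IsLam (lift k M) ↔ IsLam M := by
  cases M with
  | var m =>
    rw [lift]
    split <;> rfl
  | app M N => rfl
  | lam M => rfl

theorem lift_eq_var_zero_iff {k : ℕ} (hk : 0 < k) {M : Lam} : lift k M = var 0 ↔ M = var 0 := by
  rw [← (lift_injective k).eq_iff (a := M), lift, if_pos hk]

theorem isBetaEtaNormal_app {M N : Lam} :
    IsBetaEtaNormal (app M N) ↔ ¬ IsLam M ∧ IsBetaEtaNormal M ∧ IsBetaEtaNormal N := by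
  cases M <;> simp [IsBetaEtaNormal, IsLam]

theorem isBetaEtaNormal_lam {M : Lam} :
    IsBetaEtaNormal (lam M) ↔
      IsBetaEtaNormal M ∧ ∀ M', M = app M' (var 0) → HasFree M' 0 := by
  match M with
  | var _ | lam _ | app _ (lam _) | app _ (app _ _) | app _ (var (_ + 1)) =>
    simp [IsBetaEtaNormal]
  | app _ (var 0) => simp [IsBetaEtaNormal, and_comm]

theorem IsBetaEtaNormal.lift {M : Lam} (h : IsBetaEtaNormal M) (k : ℕ) :
    IsBetaEtaNormal (lift k M) := by
  induction M generalizing k with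
  | var m =>
    rw [Lam.lift]
    split <;> exact trivial
  | app M N ihM ihN =>
    obtain ⟨hlam, hM, hN⟩ := isBetaEtaNormal_app.1 h
    exact isBetaEtaNormal_app.2 ⟨isLam_lift.not.2 hlam, ihM hM k, ihN hN k⟩
  | lam M ih =>
    obtain ⟨hM, hη⟩ := isBetaEtaNormal_lam.1 h
    refine isBetaEtaNormal_lam.2 ⟨ih hM (k + 1), fun L hL => ?_⟩
    cases M with
    | var m => simp only [Lam.lift] at hL; split at hL <;> cases hL
    | lam M => cases hL
    | app M N =>
      obtain ⟨rfl, hN⟩ := app.inj hL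
      obtain rfl := (lift_eq_var_zero_iff k.succ_pos).1 hN
      exact (hasFree_lift_of_lt k.succ_pos).2 (hη M rfl)

theorem applyAll_concat (M N : Lam) (Ms : List Lam) :
    applyAll M (Ms ++ [N]) = app (applyAll M Ms) N := by
  induction Ms generalizing M with
  | nil => rfl
  | cons L _ ih => exact ih (app M L)

theorem IsBetaEtaNormal.eq_applyAll_var {M : Lam} (h : IsBetaEtaNormal M) (hM : ¬ IsLam M) :
    ∃ i Ms, M = applyAll (var i) Ms := by
  induction M with
  | var i => exact ⟨i, [], rfl⟩
  | lam M _ => exact (hM trivial).elim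
  | app M N ih _ =>
    obtain ⟨hlam, hM, -⟩ := isBetaEtaNormal_app.1 h
    obtain ⟨i, Ms, rfl⟩ := ih hM hlam
    exact ⟨i, Ms ++ [N], (applyAll_concat _ N Ms).symm⟩

theorem IsBetaEtaNormal.of_mem_applyAll {M L : Lam} {Ms : List Lam}
    (h : IsBetaEtaNormal (applyAll M Ms)) (hL : L ∈ Ms) : IsBetaEtaNormal L := by
  induction Ms using List.reverseRecOn with
  | nil => cases hL
  | append_singleton Ms N ih =>
    obtain ⟨-, hMs, hN⟩ := isBetaEtaNormal_app.1 (applyAll_concat M N Ms ▸ h)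
    rcases List.mem_append.1 hL with hL | hL
    · exact ih hMs hL
    · rwa [List.mem_singleton.1 hL]

/-- The size of a term. Abstractions weigh `3`, more than the application and the variable that an
η-expansion adds. -/
def weight : Lam → ℕ
  | var _ => 1
  | app M N => weight M + weight N + 1
  | lam M => weight M + 3

theorem weight_lift (k : ℕ) (M : Lam) : weight (lift k M) = weight M := by
  induction M generalizing k with
  | var m =>
    rw [lift]
    split <;> rfl
  | app M N ihM ihN => rw [lift, weight, ihM, ihN, weight]
  | lam M ih => rw [lift, weight, ih, weight]

theorem length_le_weight_applyAll (M : Lam) (Ms : List Lam) :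
    Ms.length ≤ weight (applyAll M Ms) := by
  induction Ms using List.reverseRecOn with
  | nil => exact Nat.zero_le _
  | append_singleton Ms N ih =>
    rw [applyAll_concat, weight, List.length_append, List.length_singleton]
    omega

theorem weight_lt_weight_applyAll {M L : Lam} {Ms : List Lam} (hL : L ∈ Ms) :
    weight L < weight (applyAll M Ms) := by
  induction Ms using List.reverseRecOn with
  | nil => cases hL
  | append_singleton Ms N ih =>
    rw [applyAll_concat, weight]
    rcases List.mem_append.1 hL with hL | hL
    · have := ih hL
      omega
    · rw [List.mem_singleton.1 hL]
      omega

/-- The body of an abstraction to which `M` is η-equal: `M` itself is η-expanded unless it already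
is an abstraction. -/
def etaBody : Lam → Lam
  | lam M => M
  | M => app (lift 0 M) (var 0)

theorem etaBody_of_not_isLam {M : Lam} (h : ¬ IsLam M) : etaBody M = app (lift 0 M) (var 0) := by
  cases M with
  | lam M => exact (h trivial).elim
  | _ => rfl

theorem eval_mul (M : Lam) (ρ : ℕ → TermAlgebra) (a : TermAlgebra) :
    eval M ρ * a = eval (etaBody M) (push a ρ) := by
  by_cases h : IsLam M
  · obtain ⟨M, rfl⟩ := isLam_iff.1 h
    exact eval_lam_mul M ρ a
  · rw [etaBody_of_not_isLam h, eval_app, eval_lift_push, eval_var, push_zero]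

theorem ClosedAt.etaBody {s : ℕ} {M : Lam} (h : ClosedAt s M) : ClosedAt (s + 1) (etaBody M) := by
  by_cases hlam : IsLam M
  · obtain ⟨M, rfl⟩ := isLam_iff.1 hlam
    exact closedAt_lam.1 h
  · rw [etaBody_of_not_isLam hlam]
    exact closedAt_app.2 ⟨h.lift 0, closedAt_var.2 s.succ_pos⟩

theorem IsBetaEtaNormal.etaBody {M : Lam} (h : IsBetaEtaNormal M) :
    IsBetaEtaNormal (etaBody M) := by
  by_cases hlam : IsLam M
  · obtain ⟨M, rfl⟩ := isLam_iff.1 hlam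
    exact (isBetaEtaNormal_lam.1 h).1
  · rw [etaBody_of_not_isLam hlam]
    exact isBetaEtaNormal_app.2 ⟨isLam_lift.not.2 hlam, h.lift 0, trivial⟩

theorem IsBetaEtaNormal.isLam_of_etaBody_eq {M N : Lam} (hM : IsBetaEtaNormal M)
    (h : Lam.etaBody M = Lam.etaBody N) (hlam : IsLam M) : IsLam N := by
  by_contra hN
  obtain ⟨M, rfl⟩ := isLam_iff.1 hlam
  rw [etaBody_of_not_isLam hN] at h
  exact not_hasFree_lift_self 0 N ((isBetaEtaNormal_lam.1 hM).2 _ h)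

theorem etaBody_injOn : Set.InjOn etaBody {M | IsBetaEtaNormal M} := by
  intro M (hM : IsBetaEtaNormal M) N (hN : IsBetaEtaNormal N) h
  by_cases hlam : IsLam M
  · obtain ⟨N, rfl⟩ := isLam_iff.1 (hM.isLam_of_etaBody_eq h hlam)
    obtain ⟨M, rfl⟩ := isLam_iff.1 hlam
    exact congrArg lam h
  · have hlam' : ¬ IsLam N := mt (hN.isLam_of_etaBody_eq h.symm) hlam
    rw [etaBody_of_not_isLam hlam, etaBody_of_not_isLam hlam'] at h
    exact lift_injective 0 (app.inj h).1

theorem weight_etaBody_of_isLam {M : Lam} (h : IsLam M) : weight (etaBody M) + 3 = weight M := by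
  obtain ⟨M, rfl⟩ := isLam_iff.1 h
  rfl

theorem weight_etaBody_le (M : Lam) : weight (etaBody M) ≤ weight M + 2 := by
  by_cases h : IsLam M
  · have := weight_etaBody_of_isLam h
    omega
  · rw [etaBody_of_not_isLam h, weight, weight_lift, weight]

theorem weight_etaBody_add_lt {M N : Lam} (h : IsLam M ∨ IsLam N) :
    weight (etaBody M) + weight (etaBody N) < weight M + weight N := by
  have hM := weight_etaBody_le M
  have hN := weight_etaBody_le N
  rcases h with h | h <;> have := weight_etaBody_of_isLam h <;> omega

/-! ### Böhm's theorem -/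

/-- The environment in which two normal forms of total weight at most `b` with free variables below
`m` are separated. The arities of the tuples are positive multiples of `b + 1`, so that no two agree
after at most `b` arguments have been supplied to each, and increase from `m - 1` down to `0`, so
that binding a further variable adds a new arity. -/
noncomputable def tupleEnv (b m : ℕ) : ℕ → TermAlgebra := fun i => tuple ((b + 1) * (m - i))

theorem tupleEnv_succ (b m : ℕ) :
    tupleEnv b (m + 1) = push (tuple ((b + 1) * (m + 1))) (tupleEnv b m) := by
  funext i
  cases i with
  | zero => rfl
  | succ i => simp [tupleEnv]

theorem separable_eval_of_etaBody {b m : ℕ} {M N : Lam}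
    (h : Separable (eval (etaBody M) (tupleEnv b (m + 1)))
      (eval (etaBody N) (tupleEnv b (m + 1)))) :
    Separable (eval M (tupleEnv b m)) (eval N (tupleEnv b m)) := by
  apply Separable.of_apps [tuple ((b + 1) * (m + 1))]
  simpa only [apps_cons, apps_nil, eval_mul, ← tupleEnv_succ] using h

theorem eq_and_eq_of_mul_sub_eq {b x y i j : ℕ} (hx : 0 < x) (hy : 0 < y) (hi : i ≤ b)
    (hj : j ≤ b) (h : (b + 1) * x - i = (b + 1) * y - j) : x = y ∧ i = j := by
  have hbx : b + 1 ≤ (b + 1) * x := Nat.le_mul_of_pos_right _ hx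
  have hby : b + 1 ≤ (b + 1) * y := Nat.le_mul_of_pos_right _ hy
  have hsum : (b + 1) * x + j = (b + 1) * y + i := by omega
  have hdiv := congrArg (· / (b + 1)) hsum
  simp only [Nat.mul_add_div b.succ_pos, Nat.div_eq_of_lt (Nat.lt_succ_of_le hi),
    Nat.div_eq_of_lt (Nat.lt_succ_of_le hj), add_zero] at hdiv
  subst hdiv
  exact ⟨rfl, by omega⟩

theorem exists_getElem_ne {α : Type*} {l l' : List α} (hlen : l.length = l'.length)
    (hne : l ≠ l') : ∃ (i : ℕ) (hi : i < l.length), l[i] ≠ l'[i] := by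
  by_contra! h
  exact hne (List.ext_getElem hlen fun i hi _ => h i hi)

theorem separable_eval_applyAll_var {b m i j : ℕ} {Ms Ns : List Lam} (hi : i < m) (hj : j < m)
    (hMs : Ms.length ≤ b) (hNs : Ns.length ≤ b)
    (hne : applyAll (var i) Ms ≠ applyAll (var j) Ns)
    (hargs : ∀ M ∈ Ms, ∀ N ∈ Ns, M ≠ N →
      Separable (eval M (tupleEnv b m)) (eval N (tupleEnv b m))) :
    Separable (eval (applyAll (var i) Ms) (tupleEnv b m))
      (eval (applyAll (var j) Ns) (tupleEnv b m)) := by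
  have arity_ge {x : ℕ} (hx : x < m) : b ≤ (b + 1) * (m - x) :=
    b.le_succ.trans (Nat.le_mul_of_pos_right _ (Nat.sub_pos_of_lt hx))
  simp only [eval_applyAll, eval_var, tupleEnv]
  by_cases harity : (b + 1) * (m - i) - Ms.length = (b + 1) * (m - j) - Ns.length
  · obtain ⟨hij, hlen⟩ := eq_and_eq_of_mul_sub_eq (Nat.sub_pos_of_lt hi) (Nat.sub_pos_of_lt hj)
      hMs hNs harity
    obtain rfl : i = j := by omega
    have hMN : Ms ≠ Ns := fun h => hne (h ▸ rfl)
    obtain ⟨n, hn, hMN⟩ := exists_getElem_ne hlen hMN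
    refine separable_apps_tuple_of_getElem (i := n) ?_ ?_ ?_ ?_
    · simpa using hMs.trans (arity_ge hi)
    · simpa using hlen
    · simpa using hn
    · simpa using hargs _ (List.getElem_mem hn) _ (List.getElem_mem _) hMN
  · refine separable_apps_tuple_of_ne ?_ ?_ ?_
    · simpa using hMs.trans (arity_ge hi)
    · simpa using hNs.trans (arity_ge hj)
    · simpa using harity

theorem separable_eval_tupleEnv {b m : ℕ} {M N : Lam} (hb : weight M + weight N ≤ b)
    (hM : IsBetaEtaNormal M) (hN : IsBetaEtaNormal N) (hMm : ClosedAt m M) (hNm : ClosedAt m N)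
    (hne : M ≠ N) : Separable (eval M (tupleEnv b m)) (eval N (tupleEnv b m)) := by
  induction hw : weight M + weight N using Nat.strong_induction_on generalizing M N m with
  | _ w ih =>
    subst hw
    by_cases hlam : IsLam M ∨ IsLam N
    · have hlt := weight_etaBody_add_lt hlam
      exact separable_eval_of_etaBody <| ih _ hlt (hlt.le.trans hb) hM.etaBody hN.etaBody
        hMm.etaBody hNm.etaBody (etaBody_injOn.ne hM hN hne) rfl
    · obtain ⟨hMlam, hNlam⟩ := not_or.1 hlam
      obtain ⟨i, Ms, rfl⟩ := hM.eq_applyAll_var hMlam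
      obtain ⟨j, Ns, rfl⟩ := hN.eq_applyAll_var hNlam
      obtain ⟨hi, hMsm⟩ := closedAt_applyAll.1 hMm
      obtain ⟨hj, hNsm⟩ := closedAt_applyAll.1 hNm
      have hMs := length_le_weight_applyAll (var i) Ms
      have hNs := length_le_weight_applyAll (var j) Ns
      refine separable_eval_applyAll_var (closedAt_var.1 hi) (closedAt_var.1 hj) (by omega)
        (by omega) hne fun L hL L' hL' hLL' => ?_
      have hlt := add_lt_add (weight_lt_weight_applyAll (M := var i) hL)
        (weight_lt_weight_applyAll (M := var j) hL')
      exact ih _ hlt (hlt.le.trans hb) (hM.of_mem_applyAll hL) (hN.of_mem_applyAll hL')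
        (hMsm L hL) (hNsm L' hL') hLL' rfl

theorem Closed.exists_betaEq_betaEq {M N : Lam} (hM : Closed M) (hN : Closed N)
    (hMn : IsBetaEtaNormal M) (hNn : IsBetaEtaNormal N) (hne : M ≠ N) {U V : Lam} (hU : Closed U)
    (hV : Closed V) : ∃ Q, Closed Q ∧ BetaEq (Q.app M) U ∧ BetaEq (Q.app N) V := by
  let ρ := tupleEnv (weight M + weight N) 0
  obtain ⟨a, haM, haN⟩ := separable_eval_tupleEnv le_rfl hMn hNn (hM.closedAt 0) (hN.closedAt 0)
    hne (eval U ρ) (eval V ρ)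
  obtain ⟨Q, hQ, rfl⟩ := exists_closed_eval_eq a ρ
  exact ⟨Q, hQ, ((hQ.app hM).betaEq_iff_eval_eq hU ρ).2 haM,
    ((hQ.app hN).betaEq_iff_eval_eq hV ρ).2 haN⟩

/-! ### Adequate numeral systems -/

/-- The sequence `d` has a successor, a predecessor and a zero test. -/
def IsAdequate (d : ℕ → Lam) : Prop :=
  (∃ S, Closed S ∧ ∀ n, BetaEq (app S (d n)) (d (n + 1))) ∧
    (∃ P, Closed P ∧ ∀ n, BetaEq (app P (d (n + 1))) (d n)) ∧
    ∃ Z, Closed Z ∧ BetaEq (app Z (d 0)) T ∧ ∀ n, BetaEq (app Z (d (n + 1))) F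

/-- The function `φ` is λ-definable with respect to the sequence `d`. -/
def IsDefinable (d : ℕ → Lam) {p : ℕ} (φ : (Fin p → ℕ) → ℕ) : Prop :=
  ∃ G, Closed G ∧ ∀ ns : Fin p → ℕ,
    BetaEq (applyAll G (List.ofFn fun i => d (ns i))) (d (φ ns))

theorem IsAdequate.isDefinable {d : ℕ → Lam} (h : IsAdequate d) (hc : ∀ n, Closed (d n)) {p : ℕ}
    {φ : (Fin p → ℕ) → ℕ} (hφ : Computable φ) : IsDefinable d φ := by
  obtain ⟨⟨S, hS, hSd⟩, ⟨P, hP, hPd⟩, Z, hZ, hZ0, hZs⟩ := h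
  let ρ : ℕ → TermAlgebra := fun _ => k
  have eval_app_eq {M N L : Lam} (hM : Closed M) (hN : Closed N) (hL : Closed L)
      (h : BetaEq (app M N) L) : eval M ρ * eval N ρ = eval L ρ :=
    ((hM.app hN).betaEq_iff_eval_eq hL ρ).1 h
  have hd : IsAdequateFor (fun n => eval (d n) ρ) (eval S ρ) (eval P ρ) (eval Z ρ) :=
    { succ_mul n := eval_app_eq hS (hc _) (hc _) (hSd n)
      pred_mul_succ n := eval_app_eq hP (hc _) (hc _) (hPd n)
      isZero_mul_zero a b := by rw [eval_app_eq hZ (hc _) closed_T hZ0, eval_T_mul_mul]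
      isZero_mul_succ n a b := by rw [eval_app_eq hZ (hc _) closed_F (hZs n), eval_F_mul_mul] }
  obtain ⟨g, hg⟩ := hd.exists_apps_eq_of_computable hφ
  obtain ⟨G, hG, rfl⟩ := exists_closed_eval_eq g ρ
  refine ⟨G, hG, fun ns => ?_⟩
  have hGd : Closed (applyAll G (List.ofFn fun i => d (ns i))) :=
    hG.applyAll <| List.forall_mem_ofFn_iff.2 fun i => hc (ns i)
  rw [hGd.betaEq_iff_eval_eq (hc _) ρ, eval_applyAll, List.map_ofFn]
  exact hg ns

theorem IsDefinable.exists_app_betaEq {d : ℕ → Lam} {f : ℕ → ℕ}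
    (h : IsDefinable d fun ns : Fin 1 → ℕ => f (ns 0)) :
    ∃ G, Closed G ∧ ∀ n, BetaEq (app G (d n)) (d (f n)) := by
  obtain ⟨G, hG, hGd⟩ := h
  exact ⟨G, hG, fun n => by simpa [applyAll] using hGd fun _ => n⟩

theorem exists_closed_app_betaEq_app_app {M N : Lam} (hM : Closed M) (hN : Closed N) :
    ∃ G, Closed G ∧ ∀ L, BetaEq (app G L) (app M (app N L)) := by
  refine ⟨lam (app M (app N (var 0))), ?_, fun L => .rel _ _ ?_⟩
  · rw [closed_iff_closedAt_zero, closedAt_lam, closedAt_app, closedAt_app, closedAt_var]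
    exact ⟨hM.closedAt 1, hN.closedAt 1, one_pos⟩
  · simpa [subst, (hM.closedAt 0).subst_eq, (hN.closedAt 0).subst_eq] using
      Step.beta (app M (app N (var 0))) L

theorem isAdequate_of_forall_isDefinable {d : ℕ → Lam} {Q : Lam} (hQ : Closed Q)
    (hQ0 : BetaEq (app Q (d 0)) T) (hQ1 : BetaEq (app Q (d 1)) F)
    (h : ∀ φ : (Fin 1 → ℕ) → ℕ, Computable φ → IsDefinable d φ) : IsAdequate d := by
  have exists_term {f : ℕ → ℕ} (hf : Computable f) :
      ∃ G, Closed G ∧ ∀ n, BetaEq (app G (d n)) (d (f n)) :=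
    (h (fun ns => f (ns 0)) <| hf.comp <|
      Computable.fin_app.comp Computable.id (Computable.const 0)).exists_app_betaEq
  obtain ⟨P, hP, hPd⟩ := exists_term Computable.pred
  have min_one_computable : Computable (min · 1) :=
    (Primrec.nat_min.comp Primrec.id (Primrec.const 1)).to_comp
  obtain ⟨C, hC, hCd⟩ := exists_term min_one_computable
  obtain ⟨Z, hZ, hZd⟩ := exists_closed_app_betaEq_app_app hQ hC
  have Z_app {n : ℕ} {B : Lam} (hB : BetaEq (app Q (d (min n 1))) B) : BetaEq (app Z (d n)) B :=
    .trans _ _ _ (hZd (d n)) (.trans _ _ _ (BetaEq.app (.refl Q) (hCd n)) hB)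
  exact ⟨exists_term Computable.succ, ⟨P, hP, fun n => hPd (n + 1)⟩, Z, hZ, Z_app (by simpa),
    fun n => Z_app (by simpa)⟩

end Lam

theorem statement14_general (d : ℕ → Lam) (hc : ∀ n, Lam.Closed (d n))
    (hsep : ∃ Q, Lam.Closed Q ∧ Lam.BetaEq (Lam.app Q (d 0)) Lam.T ∧
      Lam.BetaEq (Lam.app Q (d 1)) Lam.F) :
    Lam.IsAdequate d ↔
      ∀ p : ℕ, 1 ≤ p → ∀ φ : (Fin p → ℕ) → ℕ, Computable φ → Lam.IsDefinable d φ := by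
  obtain ⟨Q, hQ, hQ0, hQ1⟩ := hsep
  exact ⟨fun h _ _ _ hφ => h.isDefinable hc hφ,
    fun h => Lam.isAdequate_of_forall_isDefinable hQ hQ0 hQ1 (h 1 le_rfl)⟩

/-- (Barendregt) A numeral system `d` is adequate — it possesses closed λ-terms for
Successor, Predecessor and Zero Test — iff every total recursive function
`φ : ℕ^p → ℕ` (for every arity `p ≥ 1`) is λ-definable with respect to `d`. -/
theorem statement14 (d : ℕ → Lam)
    (hc : ∀ n, Lam.Closed (d n)) (hn : ∀ n, Lam.IsBetaEtaNormal (d n))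
    (hinj : Function.Injective d) :
    ((∃ S, Lam.Closed S ∧ ∀ n, Lam.BetaEq (Lam.app S (d n)) (d (n + 1))) ∧
     (∃ P, Lam.Closed P ∧ ∀ n, Lam.BetaEq (Lam.app P (d (n + 1))) (d n)) ∧
     (∃ Z, Lam.Closed Z ∧ Lam.BetaEq (Lam.app Z (d 0)) Lam.T ∧
        ∀ n, Lam.BetaEq (Lam.app Z (d (n + 1))) Lam.F)) ↔
    (∀ p : ℕ, 1 ≤ p → ∀ φ : (Fin p → ℕ) → ℕ, Computable φ →
      ∃ Fφ, Lam.Closed Fφ ∧ ∀ ns : Fin p → ℕ,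
        Lam.BetaEq (Lam.applyAll Fφ (List.ofFn fun i => d (ns i))) (d (φ ns))) :=
  statement14_general d hc <| (hc 0).exists_betaEq_betaEq (hc 1) (hn 0) (hn 1)
    (hinj.ne zero_ne_one) Lam.closed_T Lam.closed_F
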